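/- Let K ⊆ S¹ be a Cantor set (a nonempty compact, perfect, totally disconnected subset of the circle). The quotient space of S¹ obtained by collapsing the closure of each connected component of S¹ \ K to a single point is homeomorphic to S¹. -/

import Mathlib

open Set Filter Topology

/-- A Cantor staircase for a Cantor set of reals. -/
theorem staircase_exists (C : Set ℝ) (hC : IsCompact C) (hne : C.Nonempty)
    (hacc : ∀ x ∈ C, ∀ a b, a < x → x < b → ∃ y ∈ C, a < y ∧ y < b ∧ y ≠ x)
    (hint : ∀ a b : ℝ, a < b → ∃ t, a < t ∧ t < b ∧ t ∉ C) :
    ∃ F : ℝ → ℝ, Monotone F ∧ Continuous F ∧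
      (∀ x, (∀ c ∈ C, x < c) → F x = 0) ∧
      (∀ x, (∀ c ∈ C, c < x) → F x = 1) ∧
      (∀ x, 0 ≤ F x ∧ F x ≤ 1) ∧
      (∀ x y, x < y → (F x = F y ↔ ∀ c ∈ C, x < c → c < y → False)) := by
  classical
  set D : Set ℝ := {d | d ∈ C ∧ ∃ e, e < d ∧ e ∈ C ∧ ∀ c ∈ C, e < c → c < d → False} with hD
  have fact1 : ∀ k1 ∈ C, ∀ k2 ∈ C, k1 < k2 → ∃ d ∈ D, k1 < d ∧ d ≤ k2 := by
    intro k1 h1 k2 h2 h12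
    obtain ⟨t, ht1, ht2, htC⟩ := hint k1 k2 h12
    have c1 : IsCompact (C ∩ Ici t) := hC.inter_right isClosed_Ici
    have c2 : IsCompact (C ∩ Iic t) := hC.inter_right isClosed_Iic
    obtain ⟨d, ⟨hdC, hdt⟩, hd⟩ := c1.exists_isLeast ⟨k2, h2, ht2.le⟩
    obtain ⟨e, ⟨heC, het⟩, he⟩ := c2.exists_isGreatest ⟨k1, h1, ht1.le⟩
    simp only [mem_Ici, mem_Iic] at hdt het
    have hdt' : t < d := lt_of_le_of_ne hdt (fun h => htC (h ▸ hdC))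
    refine ⟨d, ⟨hdC, e, by linarith, heC, ?_⟩, by linarith, hd ⟨h2, ht2.le⟩⟩
    intro c hc hec hcd
    rcases le_total c t with h | h
    · exact absurd (he ⟨hc, h⟩) (not_le.2 hec)
    · exact absurd (hd ⟨hc, h⟩) (not_le.2 hcd)
  have three : ∀ x y, ∀ k ∈ C, x < k → k < y →
      ∃ k1 ∈ C, ∃ k2 ∈ C, ∃ k3 ∈ C, x < k1 ∧ k1 < k2 ∧ k2 < k3 ∧ k3 < y := by
    intro x y k hk hxk hky
    obtain ⟨k', hk', h1, h2, h3⟩ := hacc k hk x y hxk hky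
    rcases lt_or_gt_of_ne h3 with h | h
    · obtain ⟨l, hl, g1, g2, g3⟩ := hacc k hk k' y h hky
      rcases lt_or_gt_of_ne g3 with g | g
      · exact ⟨k', hk', l, hl, k, hk, h1, g1, g, hky⟩
      · exact ⟨k', hk', k, hk, l, hl, h1, h, g, g2⟩
    · obtain ⟨l, hl, g1, g2, g3⟩ := hacc k hk x k' hxk h
      rcases lt_or_gt_of_ne g3 with g | g
      · exact ⟨l, hl, k, hk, k', hk', g1, g, h, h2⟩
      · exact ⟨k, hk, l, hl, k', hk', hxk, g, g2, h2⟩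
  have fact2 : ∀ x y, ∀ k ∈ C, x < k → k < y → ∃ d1 ∈ D, ∃ d2 ∈ D, x < d1 ∧ d1 < d2 ∧ d2 < y := by
    intro x y k hk hxk hky
    obtain ⟨k1, m1, k2, m2, k3, m3, a1, a2, a3, a4⟩ := three x y k hk hxk hky
    obtain ⟨d1, n1, b1, b2⟩ := fact1 k1 m1 k2 m2 a2
    obtain ⟨d2, n2, b3, b4⟩ := fact1 k2 m2 k3 m3 a3
    exact ⟨d1, n1, d2, n2, by linarith, by linarith, by linarith⟩
  have hcount : D.Countable := by
    have hch : ∀ d : ℝ, ∃ e, d ∈ D → (e < d ∧ e ∈ C ∧ ∀ c ∈ C, e < c → c < d → False) := by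
      intro d
      by_cases h : d ∈ D
      · obtain ⟨e, he⟩ := h.2
        exact ⟨e, fun _ => he⟩
      · exact ⟨0, fun h' => absurd h' h⟩
    choose e he using hch
    refine Set.PairwiseDisjoint.countable_of_isOpen (s := fun d => Ioo (e d) d) ?_
      (fun _ _ => isOpen_Ioo) (fun d hd => nonempty_Ioo.2 (he d hd).1)
    have key : ∀ d1 ∈ D, ∀ d2 ∈ D, d1 < d2 → ∀ t, e d1 < t → t < d1 → e d2 < t → t < d2 → False := by
      intro d1 h1 d2 h2 h12 t a1 a2 a3 a4
      exact (he d2 h2).2.2 d1 h1.1 (by linarith) h12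
    intro d1 h1 d2 h2 h12
    refine Set.disjoint_left.2 ?_
    rintro t ⟨a1, a2⟩ ⟨a3, a4⟩
    rcases lt_or_gt_of_ne h12 with h | h
    · exact key d1 h1 d2 h2 h t a1 a2 a3 a4
    · exact key d2 h2 d1 h1 h t a3 a4 a1 a2
  have i1 : Countable D := hcount.to_subtype
  have i2 : DenselyOrdered D := by
    constructor
    rintro ⟨d1, h1⟩ ⟨d2, h2⟩ h12
    have h12 : d1 < d2 := h12
    have : ∃ k ∈ C, d1 < k ∧ k < d2 := by
      obtain ⟨h0, e1, a1, a2, a3⟩ := h1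
      obtain ⟨y, hy, b1, b2, b3⟩ := hacc d1 h0 e1 d2 a1 h12
      rcases lt_or_gt_of_ne b3 with h | h
      · exact (a3 y hy b1 h).elim
      · exact ⟨y, hy, h, b2⟩
    obtain ⟨k, hk, g1, g2⟩ := this
    obtain ⟨d, hd, _, _, b1, b2, b3⟩ := fact2 d1 d2 k hk g1 g2
    exact ⟨⟨d, hd⟩, b1, b2.trans b3⟩
  have i3 : NoMinOrder D := by
    constructor
    rintro ⟨d, h⟩
    obtain ⟨_, e, a1, a2, a3⟩ := h
    obtain ⟨d1, hd, _, _, b1, b2, b3⟩ := fact2 (e-1) d e a2 (by linarith) a1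
    exact ⟨⟨d1, hd⟩, b2.trans b3⟩
  have i4 : NoMaxOrder D := by
    constructor
    rintro ⟨d, h⟩
    obtain ⟨h0, e, a1, a2, a3⟩ := h
    obtain ⟨y, hy, b1, b2, b3⟩ := hacc d h0 e (d+1) a1 (by linarith)
    have hdy : d < y := by
      rcases lt_or_gt_of_ne b3 with h | h
      · exact (a3 y hy b1 h).elim
      · exact h
    obtain ⟨d1, hd, b1, b2⟩ := fact1 d h0 y hy hdy
    exact ⟨⟨d1, hd⟩, b1⟩
  have i5 : Nonempty D := by
    obtain ⟨k, hk⟩ := hne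
    obtain ⟨d1, hd, _⟩ := fact2 (k-1) (k+1) k hk (by linarith) (by linarith)
    exact ⟨⟨d1, hd⟩⟩
  have i6 : Nonempty (Ioo (0:ℚ) 1) := ⟨⟨1/2, by norm_num, by norm_num⟩⟩
  obtain ⟨φ⟩ := Order.iso_of_countable_dense D (Ioo (0:ℚ) 1)
  let ψ : D → ℝ := fun d => (((φ d : Ioo (0:ℚ) 1) : ℚ) : ℝ)
  have ψ0 : ∀ d, 0 < ψ d := fun d => by
    have := (φ d).2.1
    exact Rat.cast_pos.2 this
  have ψ1 : ∀ d, ψ d < 1 := fun d => by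
    have := (φ d).2.2
    change (((φ d : Ioo (0:ℚ) 1) : ℚ) : ℝ) < 1
    exact_mod_cast this
  have ψmono : ∀ d d', d ≤ d' → ψ d ≤ ψ d' := fun d d' h => by
    have : ((φ d : Ioo (0:ℚ) 1) : ℚ) ≤ φ d' := φ.monotone h
    exact Rat.cast_le.2 this
  have ψlt : ∀ d d', ψ d < ψ d' → d < d' := fun d d' h => by
    by_contra hh
    exact absurd (ψmono d' d (not_lt.1 hh)) (not_le.2 h)
  have ψdense : ∀ a b : ℝ, 0 ≤ a → b ≤ 1 → a < b → ∃ d, a < ψ d ∧ ψ d < b := by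
    intro a b ha hb hab
    obtain ⟨q, h1, h2⟩ := exists_rat_btwn hab
    refine ⟨φ.symm ⟨q, ?_, ?_⟩, ?_, ?_⟩
    · exact_mod_cast ha.trans_lt h1
    · exact_mod_cast h2.trans_le hb
    · simpa [ψ] using h1
    · simpa [ψ] using h2
  let S : ℝ → Set ℝ := fun x => {r | r = 0 ∨ ∃ d : D, (d : ℝ) ≤ x ∧ r = ψ d}
  have Sne : ∀ x, (S x).Nonempty := fun x => ⟨0, Or.inl rfl⟩
  have Sle : ∀ x, ∀ r ∈ S x, r ≤ 1 := by
    rintro x r (rfl | ⟨d, _, rfl⟩)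
    · norm_num
    · exact (ψ1 d).le
  have Sb : ∀ x, BddAbove (S x) := fun x => ⟨1, Sle x⟩
  let F : ℝ → ℝ := fun x => sSup (S x)
  have F0 : ∀ x, 0 ≤ F x := fun x => le_csSup (Sb x) (Or.inl rfl)
  have F1 : ∀ x, F x ≤ 1 := fun x => csSup_le (Sne x) (Sle x)
  have Fge : ∀ x (d : D), (d : ℝ) ≤ x → ψ d ≤ F x := fun x d h =>
    le_csSup (Sb x) (Or.inr ⟨d, h, rfl⟩)
  have Fle : ∀ x (d : D), x ≤ (d : ℝ) → F x ≤ ψ d := by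
    intro x d h
    refine csSup_le (Sne x) ?_
    rintro r (rfl | ⟨d', h', rfl⟩)
    · exact (ψ0 d).le
    · exact ψmono _ _ (h'.trans h)
  have Fmono : Monotone F := by
    intro x y hxy
    refine csSup_le_csSup (Sb y) (Sne x) ?_
    rintro r (rfl | ⟨d', h', rfl⟩)
    · exact Or.inl rfl
    · exact Or.inr ⟨d', h'.trans hxy, rfl⟩
  have Fcont : Continuous F := by
    let G : ℝ → Icc (0:ℝ) 1 := fun x => ⟨F x, F0 x, F1 x⟩
    have hG : Continuous G := by
      refine Monotone.continuous_of_denseRange (fun x y h => Fmono h) ?_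
      refine dense_of_exists_between ?_
      rintro ⟨a, ha⟩ ⟨b, hb⟩ hab
      obtain ⟨d, h1, h2⟩ := ψdense a b ha.1 hb.2 hab
      have : F d = ψ d := le_antisymm (Fle _ d le_rfl) (Fge _ d le_rfl)
      refine ⟨G d, ⟨_, rfl⟩, ?_, ?_⟩
      · change a < F d
        rwa [this]
      · change F d < b
        rwa [this]
    exact continuous_subtype_val.comp hG
  refine ⟨F, Fmono, Fcont, ?_, ?_, fun x => ⟨F0 x, F1 x⟩, ?_⟩
  · intro x hx
    refine le_antisymm ?_ (F0 x)
    refine csSup_le (Sne x) ?_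
    rintro r (rfl | ⟨d', h', rfl⟩)
    · exact le_rfl
    · exact absurd (hx d' d'.2.1) (not_lt.2 h')
  · intro x hx
    refine le_antisymm (F1 x) ?_
    by_contra hh
    obtain ⟨d, h1, h2⟩ := ψdense (F x) 1 (F0 x) le_rfl (not_le.1 hh)
    exact absurd (Fge x d (hx d d.2.1).le) (not_le.2 h1)
  · intro x y hxy
    constructor
    · intro h c hc h1 h2
      obtain ⟨d1, m1, d2, m2, a1, a2, a3⟩ := fact2 x y c hc h1 h2
      have b1 := Fle x ⟨d1, m1⟩ a1.le
      have b2 := Fge y ⟨d2, m2⟩ a3.le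
      have b3 : ψ ⟨d1, m1⟩ < ψ ⟨d2, m2⟩ := by
        have : ((φ ⟨d1, m1⟩ : Ioo (0:ℚ) 1) : ℚ) < φ ⟨d2, m2⟩ :=
          φ.strictMono (show (⟨d1, m1⟩ : D) < ⟨d2, m2⟩ from a2)
        exact Rat.cast_lt.2 this
      linarith
    · intro h
      by_contra hne'
      have hlt : F x < F y := lt_of_le_of_ne (Fmono hxy.le) hne'
      obtain ⟨d, h1, h2⟩ := ψdense _ _ (F0 x) (F1 y) hlt
      obtain ⟨d', h3, h4⟩ := ψdense _ _ (ψ0 d).le (F1 y) h2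
      have g1 : x < d := by
        by_contra hh
        exact absurd (Fge x d (not_lt.1 hh)) (not_le.2 h1)
      have g2 : (d' : ℝ) < y := by
        by_contra hh
        exact absurd (Fle y d' (not_lt.1 hh)) (not_le.2 h4)
      have g3 : (d : ℝ) < d' := ψlt _ _ h3
      exact h d d.2.1 g1 (g3.trans g2)

/-- Collapsing the closure of each gap (connected component of the complement) of a
Cantor set `K ⊆ S¹` to a single point yields a quotient space homeomorphic to the
circle. -/
theorem cantor_gap_collapse_is_circle (K : Set (AddCircle (1:ℝ)))
    (hne : K.Nonempty) (hK : IsCompact K) (hperf : Perfect K)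
    (htd : IsTotallyDisconnected K) :
    Nonempty
      (Quot (fun x y : AddCircle (1:ℝ) => ∃ z ∈ Kᶜ,
          x ∈ closure (connectedComponentIn Kᶜ z) ∧
          y ∈ closure (connectedComponentIn Kᶜ z)) ≃ₜ AddCircle (1:ℝ)) := by
  have hcoe : Continuous (fun t : ℝ => (t : AddCircle (1:ℝ))) := AddCircle.continuous_mk' 1
  have coeinj : ∀ a b p : ℝ, p ≤ a → a < p + 1 → p ≤ b → b < p + 1 →
      (a : AddCircle (1:ℝ)) = b → a = b := fun a b p h1 h2 h3 h4 h =>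
    (AddCircle.coe_eq_coe_iff_of_mem_Ico (p := (1:ℝ)) (a := p) ⟨h1, h2⟩ ⟨h3, h4⟩).1 h
  -- no interval lies in K
  have noint : ∀ a b : ℝ, a < b → ∃ t, a < t ∧ t < b ∧ (t : AddCircle (1:ℝ)) ∉ K := by
    intro a b hab
    by_contra! hcon
    set m := min b (a + 1) with hm
    have ham : a < m := lt_min hab (by linarith)
    have hmb : m ≤ b := min_le_left _ _
    have hma : m ≤ a + 1 := min_le_right _ _
    have hs := htd ((fun t : ℝ => (t : AddCircle (1:ℝ))) '' Ioo a m)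
      (by rintro _ ⟨t, ht, rfl⟩; exact hcon t ht.1 (ht.2.trans_le hmb))
      (isPreconnected_Ioo.image _ hcoe.continuousOn)
    have := hs ⟨a + (m - a)/3, ⟨by linarith, by linarith⟩, rfl⟩
      ⟨a + 2*(m - a)/3, ⟨by linarith, by linarith⟩, rfl⟩
    have := coeinj _ _ a (by linarith) (by linarith) (by linarith) (by linarith) this
    linarith
  obtain ⟨p, -, -, hp⟩ := noint 0 1 (by norm_num)
  have hp1 : ((p + 1 : ℝ) : AddCircle (1:ℝ)) = p := AddCircle.coe_add_period 1 p
  have rep : ∀ x : AddCircle (1:ℝ), ∃ t : ℝ, p ≤ t ∧ t < p + 1 ∧ (t : AddCircle (1:ℝ)) = x := by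
    intro x
    have := (AddCircle.equivIco 1 p x).2
    exact ⟨_, this.1, this.2, (AddCircle.equivIco 1 p).symm_apply_apply x⟩
  let C : Set ℝ := Icc p (p+1) ∩ (fun t : ℝ => (t : AddCircle (1:ℝ))) ⁻¹' K
  have hCp : ∀ c ∈ C, p < c := fun c hc => lt_of_le_of_ne hc.1.1 (by
    rintro rfl; exact hp hc.2)
  have hCp1 : ∀ c ∈ C, c < p + 1 := fun c hc => lt_of_le_of_ne hc.1.2 (by
    rintro rfl; exact hp (hp1 ▸ hc.2))
  have hCc : IsCompact C := isCompact_Icc.inter_right (hK.isClosed.preimage hcoe)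
  have hCne : C.Nonempty := by
    obtain ⟨x, hx⟩ := hne
    obtain ⟨t, h1, h2, rfl⟩ := rep x
    exact ⟨t, ⟨h1, h2.le⟩, hx⟩
  have hopen : IsOpenMap (fun t : ℝ => (t : AddCircle (1:ℝ))) := QuotientAddGroup.isOpenMap_coe
  have hacc : ∀ x ∈ C, ∀ a b, a < x → x < b → ∃ y ∈ C, a < y ∧ y < b ∧ y ≠ x := by
    intro x hx a b hax hxb
    have hacc := accPt_iff_nhds.1 (hperf.acc _ hx.2)
    have hU : Ioo (max a p) (min b (p+1)) ∈ 𝓝 x :=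
      Ioo_mem_nhds (max_lt hax (hCp x hx)) (lt_min hxb (hCp1 x hx))
    obtain ⟨y, ⟨⟨t, ht, rfl⟩, hyK⟩, hyx⟩ := hacc _ (hopen.image_mem_nhds hU)
    have t1 := max_lt_iff.1 ht.1
    have t2 := lt_min_iff.1 ht.2
    exact ⟨t, ⟨⟨t1.2.le, t2.2.le⟩, hyK⟩, t1.1, t2.1, fun h => hyx (by rw [h])⟩
  have hint : ∀ a b : ℝ, a < b → ∃ t, a < t ∧ t < b ∧ t ∉ C := by
    intro a b hab
    obtain ⟨t, h1, h2, h3⟩ := noint a b hab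
    exact ⟨t, h1, h2, fun h => h3 h.2⟩
  obtain ⟨F, Fmono, Fcont, Fz, Fo, Fb, Feq⟩ := staircase_exists C hCc hCne hacc hint
  have Fp : F p = 0 := Fz p hCp
  have Fp1 : F (p+1) = 1 := Fo _ hCp1
  let f : AddCircle (1:ℝ) → AddCircle (1:ℝ) :=
    AddCircle.liftIco 1 p (fun t => ((F t : ℝ) : AddCircle (1:ℝ)))
  have h01 : ((1:ℝ) : AddCircle (1:ℝ)) = ((0:ℝ) : AddCircle (1:ℝ)) := by
    rw [AddCircle.coe_period]; rfl
  have fcont : Continuous f := by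
    refine AddCircle.liftIco_continuous ?_ (hcoe.comp Fcont).continuousOn
    rw [Fp, Fp1, h01]
  have fcoe : ∀ t, p ≤ t → t ≤ p + 1 → f t = ((F t : ℝ) : AddCircle (1:ℝ)) := by
    intro t h1 h2
    rcases h2.lt_or_eq with h | h
    · exact AddCircle.liftIco_coe_apply ⟨h1, h⟩
    · rw [h, hp1, Fp1, h01, ← Fp]
      exact AddCircle.liftIco_coe_apply ⟨le_rfl, by linarith⟩
  have fsurj : Function.Surjective f := by
    intro y
    obtain ⟨s, hs, rfl⟩ := AddCircle.eq_coe_Ico y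
    have := intermediate_value_Icc (show p ≤ p + 1 by linarith) Fcont.continuousOn
    rw [Fp, Fp1] at this
    obtain ⟨t, ht, rfl⟩ := this ⟨hs.1, hs.2.le⟩
    exact ⟨t, fcoe t ht.1 ht.2⟩
  -- F is locally constant off C
  have Floc : ∀ t, t ∉ C → ∀ᶠ s in 𝓝 t, F s = F t := by
    intro t ht
    obtain ⟨l, u, ⟨h1, h2⟩, hlu⟩ := mem_nhds_iff_exists_Ioo_subset.1
      (hCc.isClosed.isOpen_compl.mem_nhds ht)
    filter_upwards [Ioo_mem_nhds h1 h2] with s hs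
    rcases lt_trichotomy s t with h | h | h
    · exact (Feq s t h).2 fun c hc a b => hlu ⟨hs.1.trans a, b.trans h2⟩ hc
    · rw [h]
    · exact ((Feq t s h).2 fun c hc a b => hlu ⟨h1.trans a, b.trans hs.2⟩ hc).symm
  have floc : ∀ x ∈ Kᶜ, ∀ᶠ y in 𝓝 x, f y = f x := by
    intro x hx
    obtain ⟨t, h1, h2, rfl⟩ := rep x
    have hmap : 𝓝 (t : AddCircle (1:ℝ)) = Filter.map (fun t : ℝ => (t : AddCircle (1:ℝ))) (𝓝 t) :=
      QuotientAddGroup.nhds_eq _ t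
    rw [hmap, Filter.eventually_map]
    have e1 := Floc t (fun h => hx h.2)
    rcases h1.lt_or_eq with h | h
    · filter_upwards [e1, Ioo_mem_nhds h h2] with s hs hs'
      rw [fcoe s hs'.1.le hs'.2.le, fcoe t h1 h2.le, hs]
    · subst h
      have e2 := Floc (p + 1) (fun h => lt_irrefl _ (hCp1 _ h))
      have e3 : ∀ᶠ s in 𝓝 p, F (s + 1) = F (p + 1) :=
        (continuous_id.add continuous_const : Continuous fun s : ℝ => s + 1).tendsto p e2
      filter_upwards [e1, e3, Ioo_mem_nhds (show p - 1 < p by linarith) h2] with s hs hs3 hs'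
      rcases le_total p s with g | g
      · rw [fcoe s g hs'.2.le, fcoe p h1 h2.le, hs]
      · rw [← AddCircle.coe_add_period 1 s, fcoe (s+1) (by linarith [hs'.1]) (by linarith),
          fcoe p h1 h2.le, hs3, Fp1, Fp, h01]
  have fcomp : ∀ z ∈ Kᶜ, ∀ x ∈ closure (connectedComponentIn Kᶜ z), f x = f z := by
    intro z hz
    have hcl : IsClosed {w | f w = f z} := isClosed_eq fcont continuous_const
    refine fun x hx => closure_minimal (t := {w | f w = f z}) ?_ hcl hx
    intro w hw
    have : PreconnectedSpace (connectedComponentIn Kᶜ z) :=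
      isPreconnected_iff_preconnectedSpace.1 isPreconnected_connectedComponentIn
    have hl : IsLocallyConstant (fun w : connectedComponentIn Kᶜ z => f w) := by
      rw [IsLocallyConstant.iff_eventually_eq]
      intro v
      exact continuous_subtype_val.tendsto v
        (floc v (connectedComponentIn_subset _ _ v.2))
    exact hl.apply_eq_of_preconnectedSpace ⟨w, hw⟩ ⟨z, mem_connectedComponentIn hz⟩
  set r : AddCircle (1:ℝ) → AddCircle (1:ℝ) → Prop := fun x y => ∃ z ∈ Kᶜ,
          x ∈ closure (connectedComponentIn Kᶜ z) ∧
          y ∈ closure (connectedComponentIn Kᶜ z) with hr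
  have hmk : ∀ s t : ℝ, p ≤ s → s ≤ t → t ≤ p + 1 → F s = F t →
      Quot.mk r (s : AddCircle (1:ℝ)) = Quot.mk r (t : AddCircle (1:ℝ)) := by
    intro s t h1 h2 h3 h
    rcases h2.lt_or_eq with h2 | h2
    swap
    · rw [h2]
    have hno := (Feq s t h2).1 h
    have hsub : (fun t : ℝ => (t : AddCircle (1:ℝ))) '' Ioo s t ⊆ Kᶜ := by
      rintro _ ⟨u, hu, rfl⟩ huK
      exact hno u ⟨⟨h1.trans hu.1.le, hu.2.le.trans h3⟩, huK⟩ hu.1 hu.2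
    have hmid : ((s + t)/2) ∈ Ioo s t := ⟨by linarith, by linarith⟩
    have hsub2 := (isPreconnected_Ioo.image _ hcoe.continuousOn).subset_connectedComponentIn
      (mem_image_of_mem (fun t : ℝ => (t : AddCircle (1:ℝ))) hmid) hsub
    have hcl : ∀ u ∈ Icc s t, (u : AddCircle (1:ℝ)) ∈ closure (connectedComponentIn Kᶜ
        (((s + t)/2 : ℝ) : AddCircle (1:ℝ))) := by
      intro u hu
      rw [← closure_Ioo h2.ne] at hu
      exact closure_mono hsub2 (image_closure_subset_closure_image hcoe (mem_image_of_mem _ hu))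
    exact Quot.sound ⟨_, hsub (mem_image_of_mem _ hmid), hcl s ⟨le_rfl, h2.le⟩,
      hcl t ⟨h2.le, le_rfl⟩⟩
  have hinj' : ∀ s t : ℝ, p ≤ s → s ≤ t → t < p + 1 → f s = f t →
      Quot.mk r (s : AddCircle (1:ℝ)) = Quot.mk r (t : AddCircle (1:ℝ)) := by
    intro s t h1 h2 h3 h
    rw [fcoe s h1 (by linarith), fcoe t (by linarith) h3.le] at h
    by_cases ht : F t < 1
    · refine hmk s t h1 h2 h3.le ?_
      exact coeinj _ _ 0 (Fb s).1 (by linarith [Fmono h2]) (Fb t).1 (by linarith) h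
    · have ht1 : F t = 1 := le_antisymm (Fb t).2 (not_lt.1 ht)
      by_cases hs : F s < 1
      · rw [ht1, h01] at h
        have hs0 := coeinj _ _ 0 (Fb s).1 (by linarith) le_rfl (by norm_num) h
        have g1 := hmk p s le_rfl h1 (by linarith) (by rw [Fp, hs0])
        have g2 := hmk t (p+1) (by linarith) h3.le le_rfl (by rw [Fp1, ht1])
        rw [← g1, g2, hp1]
      · have hs1 : F s = 1 := le_antisymm (Fb s).2 (not_lt.1 hs)
        exact hmk s t h1 h2 h3.le (by rw [hs1, ht1])
  have hresp : ∀ x y, r x y → f x = f y := by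
    rintro x y ⟨z, hz, hx, hy⟩
    rw [fcomp z hz x hx, fcomp z hz y hy]
  let g : Quot r → AddCircle (1:ℝ) := Quot.lift f hresp
  have gcont : Continuous g := continuous_quot_lift hresp fcont
  have gbij : Function.Bijective g := by
    constructor
    · intro a b
      induction a using Quot.ind with | _ x
      induction b using Quot.ind with | _ y
      intro h
      have h : f x = f y := h
      obtain ⟨s, h1, h2, rfl⟩ := rep x
      obtain ⟨t, h3, h4, rfl⟩ := rep y
      rcases le_total s t with hst | hst
      · exact hinj' s t h1 hst h4 h
      · exact (hinj' t s h3 hst h2 h.symm).symm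
    · intro y
      obtain ⟨x, rfl⟩ := fsurj y
      exact ⟨Quot.mk r x, rfl⟩
  exact ⟨Continuous.homeoOfEquivCompactToT2 (f := Equiv.ofBijective g gbij) gcont⟩
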